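/- arXiv:1006.0070 — 2 statements merged into one kernel-verified Lean document; each statement's English description precedes it below -/
import Mathlib

section
/- Let μ₀, μ₁ : (−∞,0) → ℝ≥0 be locally integrable nondecreasing functions. Define a_i(τ) = 4π√2 ∫_{−∞}^{τ} μ_i(w) √(τ−w) dw for τ < 0, and assume these integrals are finite and a₀(τ) = a₁(τ) for all τ < 0. Then μ₀(λ) = μ₁(λ) for almost every λ < 0. -/
open Real Set MeasureTheory

theorem abel_fubini (F h H : ℝ → ℝ) (hF : AEStronglyMeasurable F volume)
    (hh : Measurable h) (h0 : ∀ s, 0 ≤ h s)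
    (hHi : ∀ w, Integrable (fun s => (Real.sqrt (s - w))⁻¹ * h s))
    (hH : ∀ w, ∫ s, (Real.sqrt (s - w))⁻¹ * h s = H w)
    (hFH : Integrable (fun w => F w * H w)) :
    Integrable (fun s => (∫ w, F w * (Real.sqrt (s - w))⁻¹) * h s) ∧
      ∫ s, (∫ w, F w * (Real.sqrt (s - w))⁻¹) * h s = ∫ w, F w * H w := by
  have hint : Integrable (Function.uncurry
      (fun w s => F w * ((Real.sqrt (s - w))⁻¹ * h s))) (volume.prod volume) := by
    rw [integrable_prod_iff]
    · refine ⟨Filter.Eventually.of_forall fun w => ?_, ?_⟩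
      · exact (hHi w).const_mul (F w)
      · refine hFH.norm.congr (Filter.Eventually.of_forall fun w => ?_)
        have hn : ∀ s, ‖Function.uncurry (fun w s => F w * ((Real.sqrt (s - w))⁻¹ * h s)) (w, s)‖
            = ‖F w‖ * ((Real.sqrt (s - w))⁻¹ * h s) := by
          intro s
          have : 0 ≤ (Real.sqrt (s - w))⁻¹ * h s := mul_nonneg (by positivity) (h0 s)
          simp only [Function.uncurry_apply_pair]
          rw [norm_mul, Real.norm_of_nonneg this]
        simp only [hn]
        rw [integral_const_mul, hH, norm_mul, Real.norm_of_nonneg (r := H w)]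
        rw [← hH]
        exact integral_nonneg fun s => mul_nonneg (by positivity) (h0 s)
    · refine AEStronglyMeasurable.mul (hF.comp_fst) ?_
      have : Measurable (fun p : ℝ × ℝ => (Real.sqrt (p.2 - p.1))⁻¹ * h p.2) := by fun_prop
      exact this.aestronglyMeasurable
  have e : ∀ s, ∫ w, F w * ((Real.sqrt (s - w))⁻¹ * h s)
      = (∫ w, F w * (Real.sqrt (s - w))⁻¹) * h s := by
    intro s
    rw [← integral_mul_const]
    simp only [mul_assoc]
  constructor
  · have := hint.integral_prod_right
    simpa only [Function.uncurry_apply_pair, e] using this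
  · have := integral_integral_swap hint
    simp only [e, integral_const_mul, hH] at this
    exact this.symm

theorem abel_zero (G : ℝ → ℝ) (hG : ∀ τ < 0, IntegrableOn G (Iio τ))
    (hz : ∀ τ < 0, ∫ s in Iio τ, G s = 0) : ∀ᵐ s ∂(volume.restrict (Iio (0:ℝ))), G s = 0 := by
  have key : ∀ τ < 0, ∀ᵐ s ∂(volume.restrict (Iio τ)), G s = 0 := by
    intro τ hτ
    have hi : Integrable G (volume.restrict (Iio τ)) := hG τ hτ
    have all : ∀ s, MeasurableSet s → ∫ x in s, G x ∂(volume.restrict (Iio τ)) = 0 := by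
      intro s hs
      induction s, hs using MeasurableSpace.induction_on_inter
        (borel_eq_generateFrom_Iio ℝ ▸ (BorelSpace.measurable_eq (α := ℝ))) isPiSystem_Iio with
      | empty => simp
      | basic t ht =>
        obtain ⟨a, rfl⟩ := ht
        rw [Measure.restrict_restrict measurableSet_Iio, Iio_inter_Iio]
        exact hz _ (lt_of_le_of_lt inf_le_right hτ)
      | compl t ht ih =>
        have := integral_add_compl ht hi
        rw [ih, hz τ hτ] at this
        simpa using this
      | iUnion f hd hm ih =>
        rw [integral_iUnion hm hd hi.integrableOn]
        simp [ih]
    exact hi.ae_eq_zero_of_forall_setIntegral_eq_zero fun s hs _ => all s hs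
  have hU : Iio (0:ℝ) = ⋃ n : ℕ, Iio (-(1 / ((n:ℝ) + 1))) := by
    ext x
    simp only [mem_Iio, mem_iUnion]
    constructor
    · intro hx
      obtain ⟨n, hn⟩ := exists_nat_one_div_lt (neg_pos.2 hx)
      exact ⟨n, by linarith⟩
    · rintro ⟨n, hn⟩
      have : 0 < 1 / ((n:ℝ) + 1) := by positivity
      linarith
  rw [hU, ae_restrict_iUnion_iff]
  intro n
  apply key
  have : 0 < 1 / ((n:ℝ) + 1) := by positivity
  linarith

theorem abel_k1 (w τ : ℝ) :
    Integrable (fun s => (Real.sqrt (s - w))⁻¹ * (Iio τ).indicator 1 s) ∧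
    ∫ s, (Real.sqrt (s - w))⁻¹ * (Iio τ).indicator 1 s = 2 * Real.sqrt (τ - w) := by
  have e : (fun s => (Real.sqrt (s - w))⁻¹ * (Iio τ).indicator 1 s)
      = (Ioo w τ).indicator (fun s => (Real.sqrt (s - w))⁻¹) := by
    ext s
    by_cases h1 : s < τ
    · by_cases h2 : w < s
      · simp [indicator, h1, h2]
      · simp [indicator, h1, h2, Real.sqrt_eq_zero_of_nonpos (by linarith : s - w ≤ 0)]
    · simp [indicator, h1]
  rw [e, integrable_indicator_iff measurableSet_Ioo, integral_indicator measurableSet_Ioo]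
  rcases le_or_gt τ w with h | h
  · simp [Ioo_eq_empty_of_le h, Real.sqrt_eq_zero_of_nonpos (by linarith : τ - w ≤ 0)]
  have hc : ContinuousOn (fun s => 2 * Real.sqrt (s - w)) (Icc w τ) := by fun_prop
  have hd : ∀ x ∈ Ioo w τ, HasDerivAt (fun s => 2 * Real.sqrt (s - w)) ((Real.sqrt (x - w))⁻¹) x := by
    intro x hx
    have hx0 : x - w ≠ 0 := by linarith [hx.1]
    have := (((hasDerivAt_id x).sub_const w).sqrt hx0).const_mul 2
    refine HasDerivAt.congr_deriv (f' := 2 * (1 / (2 * Real.sqrt (x - w)))) this ?_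
    field_simp
  have hi := intervalIntegral.integrableOn_deriv_of_nonneg hc hd (fun x _ => by positivity)
  refine ⟨hi.mono_set Ioo_subset_Ioc_self, ?_⟩
  rw [← integral_Ioc_eq_integral_Ioo, ← intervalIntegral.integral_of_le h.le,
    intervalIntegral.integral_eq_sub_of_hasDerivAt_of_le h.le hc hd
      ((intervalIntegrable_iff_integrableOn_Ioc_of_le h.le).2 hi)]
  simp

theorem abel_k2 (w τ : ℝ) :
    Integrable (fun s => (Real.sqrt (s - w))⁻¹ * (Real.sqrt (τ - s))⁻¹) ∧
    ∫ s, (Real.sqrt (s - w))⁻¹ * (Real.sqrt (τ - s))⁻¹ = (Iio τ).indicator (fun _ => π) w := by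
  have e : (fun s => (Real.sqrt (s - w))⁻¹ * (Real.sqrt (τ - s))⁻¹)
      = (Ioo w τ).indicator (fun s => (Real.sqrt (s - w))⁻¹ * (Real.sqrt (τ - s))⁻¹) := by
    ext s
    by_cases h1 : s < τ
    · by_cases h2 : w < s
      · simp [indicator, h1, h2]
      · simp [indicator, h1, h2, Real.sqrt_eq_zero_of_nonpos (by linarith : s - w ≤ 0)]
    · simp [indicator, h1, Real.sqrt_eq_zero_of_nonpos (by linarith : τ - s ≤ 0)]
  rw [e, integrable_indicator_iff measurableSet_Ioo, integral_indicator measurableSet_Ioo]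
  rcases le_or_gt τ w with h | h
  · simp [Ioo_eq_empty_of_le h, h]
  have hL : 0 < τ - w := by linarith
  have hc : ContinuousOn (fun s => Real.arcsin ((2 * s - w - τ) / (τ - w))) (Icc w τ) :=
    (Real.continuous_arcsin.comp (by fun_prop)).continuousOn
  have hd : ∀ x ∈ Ioo w τ, HasDerivAt (fun s => Real.arcsin ((2 * s - w - τ) / (τ - w)))
      ((Real.sqrt (x - w))⁻¹ * (Real.sqrt (τ - x))⁻¹) x := by
    intro x hx
    obtain ⟨h1, h2⟩ := hx
    have hy1 : (2 * x - w - τ) / (τ - w) ≠ -1 := by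
      intro h; rw [div_eq_iff hL.ne'] at h; linarith
    have hy2 : (2 * x - w - τ) / (τ - w) ≠ 1 := by
      intro h; rw [div_eq_iff hL.ne'] at h; linarith
    have hin : HasDerivAt (fun s => (2 * s - w - τ) / (τ - w)) (2 / (τ - w)) x := by
      have := (((((hasDerivAt_id x).const_mul 2).sub_const w).sub_const τ).div_const (τ - w))
      simpa using this
    have := (Real.hasDerivAt_arcsin hy1 hy2).comp x hin
    refine this.congr_deriv ?_
    have e1 : 1 - ((2 * x - w - τ) / (τ - w)) ^ 2
        = (2 / (τ - w)) ^ 2 * ((x - w) * (τ - x)) := by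
      field_simp; ring
    rw [e1, Real.sqrt_mul (by positivity), Real.sqrt_sq (by positivity),
      Real.sqrt_mul (by linarith)]
    have : 0 < Real.sqrt (x - w) := Real.sqrt_pos.2 (by linarith)
    have : 0 < Real.sqrt (τ - x) := Real.sqrt_pos.2 (by linarith)
    field_simp
  have hi := intervalIntegral.integrableOn_deriv_of_nonneg hc hd (fun x _ => by positivity)
  refine ⟨hi.mono_set Ioo_subset_Ioc_self, ?_⟩
  rw [← integral_Ioc_eq_integral_Ioo, ← intervalIntegral.integral_of_le h.le,
    intervalIntegral.integral_eq_sub_of_hasDerivAt_of_le h.le hc hd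
      ((intervalIntegrable_iff_integrableOn_Ioc_of_le h.le).2 hi)]
  have a1 : (2 * τ - w - τ) / (τ - w) = 1 := by rw [div_eq_iff hL.ne']; ring
  have a2 : (2 * w - w - τ) / (τ - w) = -1 := by rw [div_eq_iff hL.ne']; ring
  rw [a1, a2, Real.arcsin_one, Real.arcsin_neg_one]
  simp [h]

theorem abel_core (F : ℝ → ℝ) (hF : AEStronglyMeasurable F volume)
    (hF1 : ∀ τ < 0, IntegrableOn F (Iio τ))
    (hF2 : ∀ τ < 0, Integrable (fun w => F w * Real.sqrt (τ - w)))
    (hF3 : ∀ τ < 0, ∫ w, F w * Real.sqrt (τ - w) = 0) :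
    ∀ᵐ s ∂(volume.restrict (Iio (0:ℝ))), F s = 0 := by
  have step1 : ∀ τ < 0, IntegrableOn (fun s => ∫ w, F w * (Real.sqrt (s - w))⁻¹) (Iio τ) ∧
      ∫ s in Iio τ, (∫ w, F w * (Real.sqrt (s - w))⁻¹) = 0 := by
    intro τ hτ
    have e : ∀ w, F w * (2 * Real.sqrt (τ - w)) = 2 * (F w * Real.sqrt (τ - w)) := by
      intro w; ring
    obtain ⟨h1, h2⟩ := abel_fubini F ((Iio τ).indicator 1) (fun w => 2 * Real.sqrt (τ - w)) hF
      (measurable_one.indicator measurableSet_Iio)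
      (fun s => indicator_nonneg (fun _ _ => zero_le_one) s)
      (fun w => (abel_k1 w τ).1) (fun w => (abel_k1 w τ).2)
      (by simp only [e]; exact (hF2 τ hτ).const_mul 2)
    simp only [e, integral_const_mul, hF3 τ hτ, mul_zero] at h2
    have e2 : (fun s => (∫ w, F w * (Real.sqrt (s - w))⁻¹) * (Iio τ).indicator 1 s)
        = (Iio τ).indicator (fun s => ∫ w, F w * (Real.sqrt (s - w))⁻¹) := by
      ext s
      by_cases h : s < τ <;> simp [h]
    rw [e2] at h1 h2
    rw [integrable_indicator_iff measurableSet_Iio] at h1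
    rw [integral_indicator measurableSet_Iio] at h2
    exact ⟨h1, h2⟩
  have hB := abel_zero _ (fun τ hτ => (step1 τ hτ).1) (fun τ hτ => (step1 τ hτ).2)
  rw [ae_restrict_iff' measurableSet_Iio] at hB
  refine abel_zero F hF1 fun τ hτ => ?_
  have e : (fun w => F w * (Iio τ).indicator (fun _ => π) w)
      = (Iio τ).indicator (fun w => F w * π) := by
    ext w
    by_cases h : w < τ <;> simp [h]
  obtain ⟨-, h2⟩ := abel_fubini F (fun s => (Real.sqrt (τ - s))⁻¹)
      ((Iio τ).indicator (fun _ => π)) hF (by fun_prop) (fun s => by positivity)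
      (fun w => (abel_k2 w τ).1) (fun w => (abel_k2 w τ).2)
      (by rw [e, integrable_indicator_iff measurableSet_Iio]; exact (hF1 τ hτ).mul_const π)
  rw [e, integral_indicator measurableSet_Iio, integral_mul_const] at h2
  have h3 : ∫ s, (∫ w, F w * (Real.sqrt (s - w))⁻¹) * (Real.sqrt (τ - s))⁻¹ = 0 := by
    apply integral_eq_zero_of_ae
    filter_upwards [hB] with s hs
    rcases lt_or_ge s 0 with h | h
    · rw [hs h]; simp
    · simp [Real.sqrt_eq_zero_of_nonpos (by linarith : τ - s ≤ 0)]
  rw [h3] at h2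
  rcases mul_eq_zero.1 h2.symm with h | h
  · exact h
  · exact absurd h Real.pi_ne_zero

theorem abel_int (μ : ℝ → ℝ) (hm : MonotoneOn μ (Iio 0))
    (hi : ∀ τ, τ < 0 → IntegrableOn (fun w => μ w * Real.sqrt (τ - w)) (Iio τ)) :
    AEStronglyMeasurable ((Iio 0).indicator μ) volume ∧
    (∀ τ < 0, IntegrableOn ((Iio 0).indicator μ) (Iio τ)) ∧
    (∀ τ < 0, Integrable (fun w => (Iio 0).indicator μ w * Real.sqrt (τ - w))) ∧
    (∀ τ < 0, ∫ w, (Iio 0).indicator μ w * Real.sqrt (τ - w)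
      = ∫ w in Iio τ, μ w * Real.sqrt (τ - w)) := by
  have hmeas : AEStronglyMeasurable ((Iio 0).indicator μ) volume := by
    rw [aestronglyMeasurable_indicator_iff measurableSet_Iio]
    exact (aemeasurable_restrict_of_monotoneOn measurableSet_Iio hm).aestronglyMeasurable
  have e : ∀ τ < 0, (fun w => (Iio 0).indicator μ w * Real.sqrt (τ - w))
      = (Iio τ).indicator (fun w => μ w * Real.sqrt (τ - w)) := by
    intro τ hτ
    ext w
    by_cases h : w < τ
    · simp [h, h.trans hτ]
    · simp [h, Real.sqrt_eq_zero_of_nonpos (by linarith : τ - w ≤ 0)]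
  have hI : ∀ τ < 0, Integrable (fun w => (Iio 0).indicator μ w * Real.sqrt (τ - w)) := by
    intro τ hτ
    rw [e τ hτ, integrable_indicator_iff measurableSet_Iio]
    exact hi τ hτ
  refine ⟨hmeas, ?_, hI, ?_⟩
  · intro τ hτ
    have hc : 0 < Real.sqrt (τ / 2 - τ) := Real.sqrt_pos.2 (by linarith)
    refine Integrable.mono' (((hI (τ / 2) (by linarith)).norm.integrableOn).const_mul
      (Real.sqrt (τ / 2 - τ))⁻¹) hmeas.restrict ?_
    rw [ae_restrict_iff' measurableSet_Iio]
    refine Filter.Eventually.of_forall fun w hw => ?_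
    have hw' : w < τ := hw
    have hs : Real.sqrt (τ / 2 - τ) ≤ Real.sqrt (τ / 2 - w) := Real.sqrt_le_sqrt (by linarith)
    rw [norm_mul, Real.norm_of_nonneg (Real.sqrt_nonneg _), inv_mul_eq_div, le_div_iff₀ hc]
    exact mul_le_mul_of_nonneg_left hs (norm_nonneg _)
  · intro τ hτ
    rw [e τ hτ, integral_indicator measurableSet_Iio]

/-- If the Abel-type transforms `a_i(τ) = 4π√2 ∫_{-∞}^{τ} μ_i(w) √(τ-w) dw` of two
nondecreasing nonnegative functions `μ₀, μ₁` on `(-∞,0)` coincide for all `τ < 0`,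
then `μ₀ = μ₁` almost everywhere on `(-∞,0)`. -/
theorem abel_transform_injective (μ₀ μ₁ : ℝ → ℝ)
    (hm0 : MonotoneOn μ₀ (Set.Iio 0)) (hm1 : MonotoneOn μ₁ (Set.Iio 0))
    (hn0 : ∀ w, w < 0 → 0 ≤ μ₀ w) (hn1 : ∀ w, w < 0 → 0 ≤ μ₁ w)
    (hi0 : ∀ τ, τ < 0 → IntegrableOn (fun w => μ₀ w * Real.sqrt (τ - w)) (Set.Iio τ))
    (hi1 : ∀ τ, τ < 0 → IntegrableOn (fun w => μ₁ w * Real.sqrt (τ - w)) (Set.Iio τ))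
    (heq : ∀ τ, τ < 0 →
      4 * π * Real.sqrt 2 * ∫ w in Set.Iio τ, μ₀ w * Real.sqrt (τ - w)
        = 4 * π * Real.sqrt 2 * ∫ w in Set.Iio τ, μ₁ w * Real.sqrt (τ - w)) :
    ∀ᵐ lam ∂(volume.restrict (Set.Iio (0:ℝ))), μ₀ lam = μ₁ lam := by
  obtain ⟨a0, b0, c0, d0⟩ := abel_int μ₀ hm0 hi0
  obtain ⟨a1, b1, c1, d1⟩ := abel_int μ₁ hm1 hi1
  have hC : (4 * π * Real.sqrt 2) ≠ 0 := by positivity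
  have key := abel_core (fun w => (Iio 0).indicator μ₀ w - (Iio 0).indicator μ₁ w) (a0.sub a1)
    (fun τ hτ => (b0 τ hτ).sub (b1 τ hτ))
    (fun τ hτ => by simp only [sub_mul]; exact (c0 τ hτ).sub (c1 τ hτ))
    (fun τ hτ => by
      simp only [sub_mul]
      rw [integral_sub (c0 τ hτ) (c1 τ hτ), d0 τ hτ, d1 τ hτ,
        mul_left_cancel₀ hC (heq τ hτ), sub_self])
  filter_upwards [key, ae_restrict_mem measurableSet_Iio] with s hs hs0
  rw [indicator_of_mem hs0, indicator_of_mem hs0] at hs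
  linarith
end

section
/- Let ψ₀, ψ₁ : ℝ³ → ℝ be continuous, spherically symmetric, nondecreasing in |x|, with bounded negativity sets {ψ_i < 0}, and let F : ℝ → ℝ≥0 be continuous, strictly decreasing on (−∞,0], with F((−∞,0]) = [0,∞) and F = 0 on [0,∞). Define Q_i(x,v) = F(|v|²/2 + ψ_i(x)) on ℝ³×ℝ³. If Q₀ and Q₁ are equimeasurable for Lebesgue measure on ℝ⁶ (i.e. meas{Q₀ > t} = meas{Q₁ > t} for all t > 0), then Q₀ = Q₁. -/
open Real Set MeasureTheory

local notation "ESp" => EuclideanSpace ℝ (Fin 3)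

namespace UniqEqui

def gset (s : ℝ) : Set (ESp × ℝ) := {q | ‖q.1‖ ^ 2 / 2 + q.2 ^ 2 / 2 < s}

lemma gset_open (s : ℝ) : IsOpen (gset s) := by
  unfold gset
  exact isOpen_lt (by fun_prop) (by fun_prop)

lemma gset_vol_pos : volume (gset 1) ≠ 0 := by
  apply ((gset_open 1).measure_pos volume ⟨(0, 0), ?_⟩).ne'
  simp [gset]

lemma gset_vol_fin : volume (gset 1) ≠ ⊤ := by
  have : gset 1 ⊆ Metric.closedBall 0 2 := by
    rintro ⟨v, w⟩ h
    simp only [gset, mem_ofPred_eq] at h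
    rw [mem_closedBall_zero_iff, Prod.norm_def]
    apply max_le
    · have := norm_nonneg v
      show ‖v‖ ≤ 2
      nlinarith [sq_nonneg w]
    · show ‖w‖ ≤ 2
      rw [Real.norm_eq_abs]
      apply abs_le_of_sq_le_sq _ (by norm_num)
      nlinarith [sq_nonneg ‖v‖]
  exact ((measure_mono this).trans_lt measure_closedBall_lt_top).ne

open scoped Pointwise in
lemma gset_vol (s : ℝ) :
    volume (gset s) = ENNReal.ofReal ((max s 0) ^ 2) * volume (gset 1) := by
  rcases le_or_gt s 0 with hs | hs
  · have : gset s = ∅ := by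
      ext ⟨v, w⟩
      simp only [gset, mem_ofPred_eq, mem_empty_iff_false, iff_false, not_lt]
      exact hs.trans (by positivity)
    rw [this, max_eq_right hs]; simp
  · have hq : 0 < √s := Real.sqrt_pos.mpr hs
    have hsq : √s ^ 2 = s := Real.sq_sqrt hs.le
    have hset : gset s = √s • gset 1 := by
      ext ⟨v, w⟩
      rw [Set.mem_smul_set_iff_inv_smul_mem₀ hq.ne']
      simp only [gset, mem_ofPred_eq, Prod.smul_mk, norm_smul, smul_eq_mul, mul_pow, norm_inv,
        Real.norm_eq_abs, inv_pow, sq_abs, hsq]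
      rw [← mul_lt_mul_iff_right₀ (inv_pos.mpr hs), inv_mul_cancel₀ hs.ne']
      constructor <;> intro h <;> linarith
    have : (volume : Measure (ESp × ℝ)).IsAddHaarMeasure :=
      Measure.prod.instIsAddHaarMeasure (volume : Measure ESp) (volume : Measure ℝ)
    rw [hset, Measure.addHaar_smul, max_eq_left hs.le]
    congr 2
    have : Module.finrank ℝ (ESp × ℝ) = 4 := by simp
    rw [this, abs_of_pos (by positivity), show (4 : ℕ) = 2 * 2 from rfl, pow_mul, hsq]

def bigset (ψ : ESp → ℝ) (E : ℝ) : Set ((ESp × ESp) × ℝ) :=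
  {q | ‖q.1.2‖ ^ 2 / 2 + q.2 ^ 2 / 2 + ψ q.1.1 < E}

lemma bigset_meas {ψ : ESp → ℝ} (hc : Continuous ψ) (E : ℝ) : MeasurableSet (bigset ψ E) := by
  unfold bigset
  exact (isOpen_lt (by fun_prop) (by fun_prop)).measurableSet

lemma bigset_vol1 {ψ : ESp → ℝ} (hc : Continuous ψ) (E : ℝ) :
    volume (bigset ψ E) =
      ∫⁻ w : ℝ, volume {p : ESp × ESp | ‖p.2‖ ^ 2 / 2 + ψ p.1 < E - w ^ 2 / 2} := by
  rw [Measure.volume_eq_prod (ESp × ESp) ℝ, Measure.prod_apply_symm (bigset_meas hc E)]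
  apply lintegral_congr
  intro w
  congr 1
  ext p
  simp only [bigset, mem_preimage, mem_ofPred_eq]
  constructor <;> intro h <;> linarith

lemma bigset_vol2 {ψ : ESp → ℝ} (hc : Continuous ψ) (E : ℝ) :
    volume (bigset ψ E) =
      (∫⁻ x, ENNReal.ofReal ((max (E - ψ x) 0) ^ 2)) * volume (gset 1) := by
  have hmp : MeasurePreserving (MeasurableEquiv.prodAssoc : (ESp × ESp) × ℝ ≃ᵐ ESp × ESp × ℝ) :=
    volume_preserving_prodAssoc
  have h1 : volume (bigset ψ E) = volume ((MeasurableEquiv.prodAssoc (α := ESp) (β := ESp)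
      (γ := ℝ)).symm ⁻¹' (bigset ψ E)) :=
    (hmp.symm.measure_preimage (bigset_meas hc E).nullMeasurableSet).symm
  rw [h1, Measure.volume_eq_prod ESp (ESp × ℝ),
    Measure.prod_apply ((MeasurableEquiv.measurable _) (bigset_meas hc E)),
    ← lintegral_mul_const']
  · apply lintegral_congr
    intro x
    rw [← gset_vol]
    congr 1
    ext ⟨v, w⟩
    simp only [bigset, gset, mem_preimage, mem_ofPred_eq]
    change ‖v‖ ^ 2 / 2 + w ^ 2 / 2 + ψ x < E ↔ _
    constructor <;> intro h <;> linarith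
  · exact gset_vol_fin

lemma sq_int {ψ : ESp → ℝ} (hc : Continuous ψ) (hmono : ∀ x y, ‖x‖ ≤ ‖y‖ → ψ x ≤ ψ y)
    (hbdd : Bornology.IsBounded {x | ψ x < 0}) {E : ℝ} (hE : E < 0) :
    Integrable (fun x => (max (E - ψ x) 0) ^ 2) := by
  have hs : MeasurableSet {x | ψ x < 0} := (isOpen_lt hc continuous_const).measurableSet
  have hi : Integrable ({x | ψ x < 0}.indicator (fun _ => (max (E - ψ 0) 0) ^ 2)) := by
    rw [integrable_indicator_iff hs]
    exact integrableOn_const hbdd.measure_lt_top.ne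
  refine hi.mono' (by fun_prop) (Filter.Eventually.of_forall fun x => ?_)
  rw [Real.norm_eq_abs, abs_of_nonneg (by positivity)]
  by_cases hx : ψ x < 0
  · rw [indicator_of_mem (by exact hx)]
    have := hmono 0 x (by simp)
    gcongr
  · rw [indicator_of_notMem (by exact hx), max_eq_right (by linarith [not_lt.mp hx])]
    simp

/-- Second difference quotient of the squared positive part. -/
noncomputable def dq (s h : ℝ) : ℝ := (max s 0 ^ 2 - 2 * max (s - h) 0 ^ 2 + max (s - 2 * h) 0 ^ 2) / h ^ 2

lemma dq_bound {s h : ℝ} (hh : 0 < h) : |dq s h| ≤ if 0 < s then 2 else 0 := by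
  have hh2 : 0 < h ^ 2 := by positivity
  unfold dq
  rw [abs_div, abs_of_pos hh2, div_le_iff₀ hh2]
  split_ifs with h0
  · rcases le_total s h with h1 | h1
    · rw [max_eq_left h0.le, max_eq_right (by linarith), max_eq_right (by linarith), abs_le]
      constructor <;> nlinarith
    · rcases le_total s (2 * h) with h2 | h2
      · rw [max_eq_left h0.le, max_eq_left (by linarith), max_eq_right (by linarith), abs_le]
        constructor <;> nlinarith
      · rw [max_eq_left h0.le, max_eq_left (by linarith), max_eq_left (by linarith), abs_le]
        constructor <;> nlinarith
  · rw [max_eq_right (by linarith), max_eq_right (by linarith), max_eq_right (by linarith)]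
    simp

lemma dq_tendsto (s : ℝ) : Filter.Tendsto (fun n : ℕ => dq s (1 / ((n : ℝ) + 1))) Filter.atTop
    (nhds (if 0 < s then 2 else 0)) := by
  apply tendsto_const_nhds.congr'
  split_ifs with h0
  · have := (tendsto_one_div_add_atTop_nhds_zero_nat (𝕜 := ℝ)).eventually
      (gt_mem_nhds (show (0 : ℝ) < s / 2 by linarith))
    filter_upwards [this] with n hn
    have hh : 0 < 1 / ((n : ℝ) + 1) := by positivity
    generalize 1 / ((n : ℝ) + 1) = h at *
    unfold dq
    rw [max_eq_left h0.le, max_eq_left (by linarith), max_eq_left (by linarith)]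
    field_simp
    ring
  · filter_upwards with n
    have hh : 0 < 1 / ((n : ℝ) + 1) := by positivity
    have := dq_bound (s := s) hh
    rw [if_neg h0] at this
    exact (abs_nonpos_iff.mp this).symm

lemma dq_lim {ψ : ESp → ℝ} (hc : Continuous ψ)
    (hbdd : Bornology.IsBounded {x | ψ x < 0}) {E : ℝ} (hE : E < 0) :
    Filter.Tendsto (fun n : ℕ => ∫ x, dq (E - ψ x) (1 / ((n : ℝ) + 1))) Filter.atTop
      (nhds (2 * volume.real {x | ψ x < E})) := by
  have hs : MeasurableSet {x | ψ x < E} := (isOpen_lt hc continuous_const).measurableSet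
  have hfin : volume {x | ψ x < E} ≠ ⊤ :=
    (hbdd.subset (fun x (hx : ψ x < E) => (hx.trans hE : ψ x < 0))).measure_lt_top.ne
  have heq : (fun x => if 0 < E - ψ x then (2 : ℝ) else 0)
      = {x | ψ x < E}.indicator (fun _ => (2 : ℝ)) := by
    ext x
    simp [indicator_apply]
  have h2 : ∫ x, (if 0 < E - ψ x then (2 : ℝ) else 0) = 2 * volume.real {x | ψ x < E} := by
    rw [heq, integral_indicator_const _ hs, smul_eq_mul, mul_comm]
  rw [← h2]
  apply tendsto_integral_of_dominated_convergence (fun x => if 0 < E - ψ x then (2 : ℝ) else 0)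
  · intro n
    apply Continuous.aestronglyMeasurable
    unfold dq
    fun_prop
  · rw [heq, integrable_indicator_iff hs]
    exact integrableOn_const hfin
  · intro n
    exact Filter.Eventually.of_forall fun x => dq_bound (by positivity)
  · exact Filter.Eventually.of_forall fun x => dq_tendsto _

lemma dq_integral {ψ : ESp → ℝ} (hc : Continuous ψ) (hmono : ∀ x y, ‖x‖ ≤ ‖y‖ → ψ x ≤ ψ y)
    (hbdd : Bornology.IsBounded {x | ψ x < 0}) {E h : ℝ} (hE : E < 0) (hh : 0 < h) :
    ∫ x, dq (E - ψ x) h = ((∫ x, max (E - ψ x) 0 ^ 2) - 2 * (∫ x, max (E - h - ψ x) 0 ^ 2)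
      + ∫ x, max (E - 2 * h - ψ x) 0 ^ 2) / h ^ 2 := by
  have i0 := sq_int hc hmono hbdd hE
  have i1 := sq_int hc hmono hbdd (show E - h < 0 by linarith)
  have i2 := sq_int hc hmono hbdd (show E - 2 * h < 0 by linarith)
  unfold dq
  simp_rw [sub_right_comm E _ h, sub_right_comm E _ (2 * h)]
  have i3 : Integrable (fun x => max (E - ψ x) 0 ^ 2 - 2 * max (E - h - ψ x) 0 ^ 2) :=
    i0.sub (i1.const_mul 2)
  rw [integral_div, integral_add i3 i2, integral_sub i0 (i1.const_mul 2),
    integral_const_mul]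

lemma half {ψ₀ ψ₁ : ESp → ℝ} (hc0 : Continuous ψ₀)
    (hmono0 : ∀ x y, ‖x‖ ≤ ‖y‖ → ψ₀ x ≤ ψ₀ y)
    (hmono1 : ∀ x y, ‖x‖ ≤ ‖y‖ → ψ₁ x ≤ ψ₁ y)
    (hc1 : Continuous ψ₁)
    (hbdd0 : Bornology.IsBounded {x | ψ₀ x < 0})
    (hvol : ∀ E < 0, volume {x | ψ₀ x < E} = volume {x | ψ₁ x < E})
    (x : ESp) (hx : ψ₀ x < 0) : ψ₁ x ≤ ψ₀ x := by
  by_contra! hlt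
  set E := min (ψ₁ x) (ψ₀ x / 2) with hEdef
  have hE : E < 0 := (min_le_right _ _).trans_lt (by linarith)
  have hE0 : ψ₀ x < E := lt_min hlt (by linarith)
  have hE1 : E ≤ ψ₁ x := min_le_left _ _
  have hbB : Bornology.IsBounded {y | ψ₀ y < E} :=
    hbdd0.subset (fun y (hy : ψ₀ y < E) => (hy.trans hE : ψ₀ y < 0))
  have hoB : IsOpen {y | ψ₀ y < E} := isOpen_lt hc0 continuous_const
  have hoA : IsOpen {y | ψ₁ y < E} := isOpen_lt hc1 continuous_const
  have hA : {y | ψ₁ y < E} ⊆ Metric.closedBall 0 ‖x‖ := by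
    intro y hy
    rw [mem_closedBall_zero_iff]
    by_contra! h
    exact absurd (hmono1 x y h.le) (not_le.mpr (lt_of_lt_of_le hy hE1))
  have hBc : Metric.closedBall 0 ‖x‖ ⊆ {y | ψ₀ y < E} := by
    intro y hy
    rw [mem_closedBall_zero_iff] at hy
    exact (hmono0 y x hy).trans_lt hE0
  have hnull : volume ({y | ψ₀ y < E} \ {y | ψ₁ y < E}) = 0 := by
    rw [measure_sdiff (hA.trans hBc) hoA.measurableSet.nullMeasurableSet, hvol E hE, tsub_self]
    rw [← hvol E hE]
    exact hbB.measure_lt_top.ne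
  have hempty : {y | ψ₀ y < E} \ Metric.closedBall 0 ‖x‖ = ∅ :=
    ((hoB.sdiff Metric.isClosed_closedBall).measure_eq_zero_iff volume).mp
      (measure_mono_null (sdiff_subset_sdiff_right hA) hnull)
  have hBeq : {y | ψ₀ y < E} = Metric.closedBall 0 ‖x‖ :=
    (sdiff_eq_empty.mp hempty).antisymm hBc
  have hclopen : IsClopen {y | ψ₀ y < E} := ⟨hBeq ▸ Metric.isClosed_closedBall, hoB⟩
  have huniv := hclopen.eq_univ ⟨x, hE0⟩
  rw [huniv] at hbB
  exact NormedSpace.unbounded_univ ℝ ESp hbB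

end UniqEqui

open UniqEqui in
/-- Uniqueness under equimeasurability: if `Q_i(x,v) = F(|v|²/2 + ψ_i(x))` with a common
strictly decreasing profile `F` and continuous radially symmetric nondecreasing potentials
`ψ_i` with bounded negativity sets, then equimeasurability of `Q₀` and `Q₁` implies `Q₀ = Q₁`. -/
theorem uniqueness_under_equimeasurability
    (ψ₀ ψ₁ : EuclideanSpace ℝ (Fin 3) → ℝ) (F : ℝ → ℝ)
    (hc0 : Continuous ψ₀) (hc1 : Continuous ψ₁)
    (hmono0 : ∀ x y, ‖x‖ ≤ ‖y‖ → ψ₀ x ≤ ψ₀ y)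
    (hmono1 : ∀ x y, ‖x‖ ≤ ‖y‖ → ψ₁ x ≤ ψ₁ y)
    (hrad0 : ∀ x y, ‖x‖ = ‖y‖ → ψ₀ x = ψ₀ y)
    (hrad1 : ∀ x y, ‖x‖ = ‖y‖ → ψ₁ x = ψ₁ y)
    (hbdd0 : Bornology.IsBounded {x | ψ₀ x < 0})
    (hbdd1 : Bornology.IsBounded {x | ψ₁ x < 0})
    (hFc : Continuous F) (hFnn : ∀ s, 0 ≤ F s)
    (hFanti : StrictAntiOn F (Set.Iic 0))
    (hFsurj : F '' Set.Iic 0 = Set.Ici 0)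
    (hFzero : ∀ s, 0 ≤ s → F s = 0)
    (hequi : ∀ t, 0 < t →
      volume {p : EuclideanSpace ℝ (Fin 3) × EuclideanSpace ℝ (Fin 3) |
          t < F (‖p.2‖ ^ 2 / 2 + ψ₀ p.1)}
        = volume {p : EuclideanSpace ℝ (Fin 3) × EuclideanSpace ℝ (Fin 3) |
          t < F (‖p.2‖ ^ 2 / 2 + ψ₁ p.1)}) :
    ∀ x v : EuclideanSpace ℝ (Fin 3),
      F (‖v‖ ^ 2 / 2 + ψ₀ x) = F (‖v‖ ^ 2 / 2 + ψ₁ x) := by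
  have hF0 : F 0 = 0 := hFzero 0 le_rfl
  have hlev : ∀ e < 0, ∀ s, F e < F s ↔ s < e := by
    intro e he s
    have hpos : 0 < F e := hF0 ▸ hFanti he.le (Set.mem_Iic.mpr (le_refl (0 : ℝ))) he
    rcases le_total s 0 with hs | hs
    · exact hFanti.lt_iff_gt he.le hs
    · rw [hFzero s hs]
      constructor <;> intro h <;> linarith
  have hsub : ∀ e < 0, volume {p : ESp × ESp | ‖p.2‖ ^ 2 / 2 + ψ₀ p.1 < e}
      = volume {p : ESp × ESp | ‖p.2‖ ^ 2 / 2 + ψ₁ p.1 < e} := by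
    intro e he
    have hpos : 0 < F e := hF0 ▸ hFanti he.le (Set.mem_Iic.mpr (le_refl (0 : ℝ))) he
    have := hequi (F e) hpos
    simpa only [hlev e he] using this
  have hsq : ∀ E < 0, ∫ x, max (E - ψ₀ x) 0 ^ 2 = ∫ x, max (E - ψ₁ x) 0 ^ 2 := by
    intro E hE
    have hb : volume (bigset ψ₀ E) = volume (bigset ψ₁ E) := by
      rw [bigset_vol1 hc0, bigset_vol1 hc1]
      apply lintegral_congr
      intro w
      exact hsub _ (by nlinarith [sq_nonneg w])
    rw [bigset_vol2 hc0, bigset_vol2 hc1,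
      ENNReal.mul_left_inj gset_vol_pos gset_vol_fin] at hb
    rw [integral_eq_lintegral_of_nonneg_ae (Filter.Eventually.of_forall fun x => by positivity)
        (sq_int hc0 hmono0 hbdd0 hE).1,
      integral_eq_lintegral_of_nonneg_ae (Filter.Eventually.of_forall fun x => by positivity)
        (sq_int hc1 hmono1 hbdd1 hE).1, hb]
  have hvol : ∀ E < 0, volume {x | ψ₀ x < E} = volume {x | ψ₁ x < E} := by
    intro E hE
    have l0 := dq_lim hc0 hbdd0 hE
    have l1 := dq_lim hc1 hbdd1 hE
    have : (fun n : ℕ => ∫ x, dq (E - ψ₀ x) (1 / ((n : ℝ) + 1)))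
        = (fun n : ℕ => ∫ x, dq (E - ψ₁ x) (1 / ((n : ℝ) + 1))) := by
      ext n
      have hh : 0 < 1 / ((n : ℝ) + 1) := by positivity
      rw [dq_integral hc0 hmono0 hbdd0 hE hh, dq_integral hc1 hmono1 hbdd1 hE hh, hsq E hE,
        hsq _ (by linarith), hsq _ (by linarith)]
    rw [this] at l0
    have hr := tendsto_nhds_unique l0 l1
    have f0 : volume {x | ψ₀ x < E} ≠ ⊤ :=
      (hbdd0.subset (fun x (hx : ψ₀ x < E) => (hx.trans hE : ψ₀ x < 0))).measure_lt_top.ne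
    have f1 : volume {x | ψ₁ x < E} ≠ ⊤ :=
      (hbdd1.subset (fun x (hx : ψ₁ x < E) => (hx.trans hE : ψ₁ x < 0))).measure_lt_top.ne
    exact (measureReal_eq_measureReal_iff f0 f1).mp (by linarith)
  intro x v
  have a := half hc0 hmono0 hmono1 hc1 hbdd0 hvol x
  have b := half hc1 hmono1 hmono0 hc0 hbdd1 (fun E hE => (hvol E hE).symm) x
  have hv : 0 ≤ ‖v‖ ^ 2 / 2 := by positivity
  by_cases h0 : ψ₀ x < 0
  · have h1 := a h0
    rw [le_antisymm h1 (b (h1.trans_lt h0))]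
  · by_cases h1 : ψ₁ x < 0
    · exact absurd ((b h1).trans_lt h1) h0
    · rw [hFzero _ (by linarith), hFzero _ (by linarith)]
end
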